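/- Let G be a connected graph of order n₁ and let n₂ ≥ 2 be an integer. If n₁ > n₂, then pd(G⊙N_{n₂}) ≥ n₂ + 1. -/

import Mathlib

/-!
Two leaves attached to the same vertex of `G` have the same neighbourhood, so they are equidistant
from every other vertex, and a resolving partition must put them in different cells
(`dist_le_of_neighbors`). Hence there are at least `n₂` cells. If there were exactly `n₂`, every
vertex `v` of `G` would have a leaf in each cell, so its representation would be `0` at its own cell
and `1` at all others. It would then be determined by the cell of `v`; as `n₁ > n₂`, two
vertices of `G` share a cell, a contradiction.

The partition dimension is an infimum in `ℕ`, which is `0` on the empty set, so the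
existence of a resolving partition is also needed: the partition into singletons is one.
-/

open SimpleGraph

/-- The corona product `G ⊙ H`: one copy of `G`, one copy of `H` for each vertex of `G`,
with the `i`-th vertex of `G` joined to every vertex of the `i`-th copy of `H`. -/
def corona {α β : Type*} (G : SimpleGraph α) (H : SimpleGraph β) :
    SimpleGraph (α ⊕ α × β) :=
  SimpleGraph.fromRel (fun x y =>
    match x, y with
    | Sum.inl a, Sum.inl b => G.Adj a b
    | Sum.inl a, Sum.inr iu => a = iu.1
    | Sum.inr iu, Sum.inr jw => iu.1 = jw.1 ∧ H.Adj iu.2 jw.2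
    | _, _ => False)

/-- The distance from a vertex to a set of vertices: `d(v,A) = min_{u ∈ A} d(v,u)`. -/
noncomputable def setDist {α : Type*} (G : SimpleGraph α) (v : α) (A : Set α) : ℕ :=
  sInf (G.dist v '' A)

/-- `S` is a resolving set for `G`: distinct vertices have distinct metric representations. -/
def IsResolvingSet {α : Type*} (G : SimpleGraph α) (S : Set α) : Prop :=
  ∀ u v : α, (∀ w ∈ S, G.dist u w = G.dist v w) → u = v

/-- The metric dimension of `G`: minimum cardinality of a resolving set. -/
noncomputable def metricDim {α : Type*} (G : SimpleGraph α) : ℕ :=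
  sInf {k | ∃ S : Set α, IsResolvingSet G S ∧ S.ncard = k}

/-- A family of sets is a resolving partition for `G` if it is a partition of the vertex set
into nonempty cells and distinct vertices have distinct partition representations. -/
def IsResolvingPartition {α : Type*} (G : SimpleGraph α) (P : Set (Set α)) : Prop :=
  (∀ A ∈ P, A.Nonempty) ∧ (∀ v : α, ∃! A : Set α, A ∈ P ∧ v ∈ A) ∧
    ∀ u v : α, (∀ A ∈ P, setDist G u A = setDist G v A) → u = v

/-- The partition dimension of `G`: minimum number of cells in a resolving partition. -/
noncomputable def partitionDim {α : Type*} (G : SimpleGraph α) : ℕ :=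
  sInf {t | ∃ P : Set (Set α), IsResolvingPartition G P ∧ P.ncard = t}

/-- `c(H)`: the maximum cardinality of a connected component of `H` which is isomorphic to a
complete graph (i.e. whose vertex set is a clique). -/
noncomputable def maxCompleteComp {β : Type*} (H : SimpleGraph β) : ℕ :=
  sSup {k | ∃ C : H.ConnectedComponent, H.IsClique C.supp ∧ C.supp.ncard = k}

/-- `β(H)`: the number of isolated vertices of `H`. -/
noncomputable def numIsolated {β : Type*} (H : SimpleGraph β) : ℕ :=
  Set.ncard {v : β | ∀ u, ¬ H.Adj v u}

/-- `α(H)`: the number of connected components of `H` of order greater than one. -/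
noncomputable def numBigComp {β : Type*} (H : SimpleGraph β) : ℕ :=
  Set.ncard {C : H.ConnectedComponent | 1 < C.supp.ncard}

lemma corona_adj_inl_inl {α β : Type*} {G : SimpleGraph α} {H : SimpleGraph β} {a b : α}
    (hab : G.Adj a b) : (corona G H).Adj (Sum.inl a) (Sum.inl b) := by
  simp [corona, hab, hab.ne]

lemma corona_adj_inl_inr {α β : Type*} (G : SimpleGraph α) (H : SimpleGraph β) (a : α) (b : β) :
    (corona G H).Adj (Sum.inl a) (Sum.inr (a, b)) := by
  simp [corona]

lemma corona_bot_adj_inr {α β : Type*} {G : SimpleGraph α} {a : α} {b : β} {x : α ⊕ α × β}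
    (hx : (corona G (⊥ : SimpleGraph β)).Adj (Sum.inr (a, b)) x) : x = Sum.inl a := by
  rcases x with x | x <;> simp_all [corona]

lemma corona_connected {α β : Type*} {G : SimpleGraph α} (hG : G.Connected) (H : SimpleGraph β) :
    (corona G H).Connected := by
  have hbase : ∀ a b : α, (corona G H).Reachable (Sum.inl a) (Sum.inl b) := fun a b =>
    (hG.preconnected a b).map
      (⟨Sum.inl, fun hab => corona_adj_inl_inl hab⟩ : G →g corona G H)
  have hroot : ∀ x : α ⊕ α × β, ∃ a, (corona G H).Reachable (Sum.inl a) x := by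
    rintro (a | ⟨a, b⟩)
    · exact ⟨a, .refl _⟩
    · exact ⟨a, (corona_adj_inl_inr G H a b).reachable⟩
  have : Nonempty α := hG.nonempty
  refine { preconnected := fun x y => ?_, nonempty := inferInstance }
  obtain ⟨a, ha⟩ := hroot x
  obtain ⟨b, hb⟩ := hroot y
  exact ha.symm.trans ((hbase a b).trans hb)

/-- A geodesic from `u'` to `w ≠ u'` can be rerouted to start at `u` by replacing its first edge. -/
lemma dist_le_of_neighbors {α : Type*} {G : SimpleGraph α} (hG : G.Connected) {u u' w : α}
    (hN : ∀ x, G.Adj u' x → G.Adj u x) (hw : w ≠ u') : G.dist u w ≤ G.dist u' w := by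
  obtain ⟨p, hp⟩ := hG.exists_walk_length_eq_dist u' w
  rw [← hp]
  cases p with
  | nil => exact absurd rfl hw
  | cons hadj q => exact SimpleGraph.dist_le (SimpleGraph.Walk.cons (hN _ hadj) q)

lemma setDist_eq_zero_of_mem {α : Type*} {G : SimpleGraph α} {v : α} {A : Set α} (hv : v ∈ A) :
    setDist G v A = 0 :=
  Nat.sInf_eq_zero.2 (Or.inl ⟨v, hv, SimpleGraph.dist_self⟩)

lemma setDist_eq_one {α : Type*} {G : SimpleGraph α} (hG : G.Connected) {v w : α} {A : Set α}
    (hv : v ∉ A) (hw : w ∈ A) (hvw : G.Adj v w) : setDist G v A = 1 := by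
  refine le_antisymm (Nat.sInf_le ⟨w, hw, SimpleGraph.dist_eq_one_iff_adj.2 hvw⟩) ?_
  refine Nat.one_le_iff_ne_zero.2 fun h0 => ?_
  rcases Nat.sInf_eq_zero.1 h0 with ⟨x, hx, hvx⟩ | hempty
  · exact hv ((hG.dist_eq_zero_iff.1 hvx) ▸ hx)
  · exact (Set.image_eq_empty.1 hempty ▸ hw : w ∈ (∅ : Set α))

lemma exists_isResolvingPartition {α : Type*} {G : SimpleGraph α} (hG : G.Connected) :
    ∃ P : Set (Set α), IsResolvingPartition G P := by
  refine ⟨Set.range fun v => {v}, ?_, fun v => ⟨{v}, ⟨⟨v, rfl⟩, rfl⟩, ?_⟩, fun u v huv => ?_⟩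
  · rintro _ ⟨v, rfl⟩
    exact Set.singleton_nonempty v
  · rintro _ ⟨⟨w, rfl⟩, hw⟩
    rw [Set.mem_singleton_iff.1 hw]
  · have h0 := huv {u} ⟨u, rfl⟩
    simp only [setDist, Set.image_singleton, csInf_singleton, SimpleGraph.dist_self] at h0
    exact (hG.dist_eq_zero_iff.1 h0.symm).symm

/-- Let `G` be a connected graph of order `n₁` and `n₂ ≥ 2` an integer. If
`n₁ > n₂`, then `pd(G⊙N_{n₂}) ≥ n₂ + 1`. -/
theorem stmt13 {V : Type*} [Fintype V] (G : SimpleGraph V) (hG : G.Connected)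
    (n₁ n₂ : ℕ) (hn₁ : Fintype.card V = n₁) (h₂ : 2 ≤ n₂) (h : n₁ > n₂) :
    partitionDim (corona G (⊥ : SimpleGraph (Fin n₂))) ≥ n₂ + 1 := by
  have hC := corona_connected hG (⊥ : SimpleGraph (Fin n₂))
  obtain ⟨P₀, hP₀⟩ := exists_isResolvingPartition hC
  refine le_csInf ⟨_, P₀, hP₀, rfl⟩ ?_
  rintro _ ⟨P, ⟨-, hpart, hres⟩, rfl⟩
  by_contra hlt
  have hcard : P.ncard ≤ n₂ := by omega
  -- `f x` is the cell containing `x`.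
  choose f hf huniq using hpart
  have hmem : ∀ {x A}, A ∈ P → x ∈ A → f x = A := fun hA hx => (huniq _ _ ⟨hA, hx⟩).symm
  have hleaf : ∀ v : V, Function.Injective fun i : Fin n₂ => f (Sum.inr (v, i)) := by
    intro v i j hij
    have hN : ∀ (i j : Fin n₂) x, (corona G (⊥ : SimpleGraph (Fin n₂))).Adj (Sum.inr (v, i)) x →
        (corona G (⊥ : SimpleGraph (Fin n₂))).Adj (Sum.inr (v, j)) x := by
      intro i j x hx
      rw [corona_bot_adj_inr hx]
      exact (corona_adj_inl_inr G _ v j).symm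
    have heq := hres (Sum.inr (v, i)) (Sum.inr (v, j)) fun A hA => by
      by_cases hi : f (Sum.inr (v, i)) = A
      · have hj : f (Sum.inr (v, j)) = A := hij.symm.trans hi
        rw [setDist_eq_zero_of_mem (hi ▸ (hf _).2), setDist_eq_zero_of_mem (hj ▸ (hf _).2)]
      · have hj : f (Sum.inr (v, j)) ≠ A := fun hj => hi (hij.trans hj)
        unfold setDist
        congr 1
        refine Set.image_congr fun w hw => le_antisymm ?_ ?_
        · refine dist_le_of_neighbors hC (hN j i) ?_
          rintro rfl
          exact hj (hmem hA hw)
        · refine dist_le_of_neighbors hC (hN i j) ?_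
          rintro rfl
          exact hi (hmem hA hw)
    simpa using heq
  have hrange : ∀ v : V, (Set.range fun i : Fin n₂ => f (Sum.inr (v, i))) = P := by
    intro v
    refine Set.eq_of_subset_of_ncard_le ?_ ?_ (Set.toFinite P)
    · rintro _ ⟨i, rfl⟩
      exact (hf _).1
    · rw [← Set.image_univ, Set.ncard_image_of_injective _ (hleaf v), Set.ncard_univ]
      simpa using hcard
  have hinj : Function.Injective fun v : V => f (Sum.inl v) := by
    intro u v huv
    have huv : f (Sum.inl u) = f (Sum.inl v) := huv
    have hone : ∀ (v : V), ∀ A ∈ P, f (Sum.inl v) ≠ A →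
        setDist (corona G (⊥ : SimpleGraph (Fin n₂))) (Sum.inl v) A = 1 := by
      intro v A hA hv
      obtain ⟨i, hi⟩ := (hrange v).symm ▸ hA
      exact setDist_eq_one hC (fun hvA => hv (hmem hA hvA)) (hi ▸ (hf (Sum.inr (v, i))).2)
        (corona_adj_inl_inr G _ v i)
    have heq := hres (Sum.inl u) (Sum.inl v) fun A hA => by
      by_cases hu : f (Sum.inl u) = A
      · have hv : f (Sum.inl v) = A := huv.symm.trans hu
        rw [setDist_eq_zero_of_mem (hu ▸ (hf _).2), setDist_eq_zero_of_mem (hv ▸ (hf _).2)]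
      · rw [hone u A hA hu, hone v A hA (huv ▸ hu)]
    exact Sum.inl_injective heq
  have hle : n₁ ≤ P.ncard := by
    rw [← hn₁, ← Nat.card_eq_fintype_card, ← Set.ncard_univ, ← Set.ncard_image_of_injective _ hinj]
    refine Set.ncard_le_ncard ?_ (Set.toFinite P)
    rintro _ ⟨v, -, rfl⟩
    exact (hf _).1
  omega
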